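/- Solution of the homological equation at the symbol level: let m ∈ ℝ and h ∈ C⁰(𝕋,S^m). Define χ(t,x,ξ) := ∫₀ᵗ ( h(s,x,ξ) − (1/2π)∫₀^{2π} h(s₁,x,ξ) ds₁ ) ds. Then χ is 2π-periodic in t, continuously differentiable in t, for each t the function χ(t,·) belongs to S^m, the seminorms Σ_{α+β≤j} sup_{t,x,ξ} |∂_x^α∂_ξ^β∂_t^ℓ χ(t,x,ξ)|(1+x²+ξ²)^{−m+(α+β)/2} are finite for every j ∈ ℕ and ℓ ∈ {0,1}, χ satisfies ∂_t χ(t,x,ξ) = h(t,x,ξ) − (1/2π)∫₀^{2π} h(s,x,ξ) ds, and if h is real valued then so is χ. -/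

import Mathlib

open Real MeasureTheory Filter Topology

noncomputable section

/-- Partial derivative in the first variable `x` (complex valued symbols). -/
def pdxC (f : ℝ × ℝ → ℂ) : ℝ × ℝ → ℂ := fun p => fderiv ℝ f p (1, 0)

/-- Partial derivative in the second variable `ξ` (complex valued symbols). -/
def pdxiC (f : ℝ × ℝ → ℂ) : ℝ × ℝ → ℂ := fun p => fderiv ℝ f p (0, 1)

/-- Membership in `C⁰(𝕋, S^m)`: 2π-periodicity and continuity in `t`, smoothness in
`(x,ξ)`, and uniform symbol bounds of order `m`. -/
def InC0SC (m : ℝ) (v : ℝ → ℝ × ℝ → ℂ) : Prop :=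
  (∀ t p, v (t + 2 * π) p = v t p) ∧
  Continuous (fun q : ℝ × (ℝ × ℝ) => v q.1 q.2) ∧
  (∀ t, ContDiff ℝ (⊤ : ℕ∞) (v t)) ∧
  ∀ α β : ℕ, ∃ C > 0, ∀ (t : ℝ) (p : ℝ × ℝ),
    ‖pdxC^[α] (pdxiC^[β] (v t)) p‖ ≤
      C * (1 + p.1 ^ 2 + p.2 ^ 2) ^ (m - ((α : ℝ) + β) / 2)

/-- Time average `(1/2π)∫₀^{2π} h(s₁,x,ξ) ds₁`. -/
def havg (h : ℝ → ℝ × ℝ → ℂ) (p : ℝ × ℝ) : ℂ :=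
  (1 / (2 * π) : ℝ) • ∫ s in (0:ℝ)..(2 * π), h s p

/-- Solution of the homological equation:
`χ(t,x,ξ) := ∫₀ᵗ ( h(s,x,ξ) − (1/2π)∫₀^{2π} h(s₁,x,ξ) ds₁ ) ds`. -/
def chi (h : ℝ → ℝ × ℝ → ℂ) (t : ℝ) (p : ℝ × ℝ) : ℂ :=
  ∫ s in (0:ℝ)..t, (h s p - havg h p)

/-!
Removing the time average makes `h` mean-free in `t`, so its primitive `χ` is again `2π`-periodic,
and every `χ(t, ·)` is an integral of `h - ⟨h⟩` over an interval of length at most `2π`. The symbol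
estimates on the partial derivatives `∂_x^α ∂_ξ^β` amount to estimates on the norms of the total
derivatives of order `α + β`. The latter are preserved, up to the length of the interval, by
integration in `t`, because they allow differentiation under the integral sign to every order.
-/

section ParametricIntegral

open scoped ContDiff

variable {ι E F : Type*} [MeasurableSpace ι] {μ : Measure ι}
  [NormedAddCommGroup E] [NormedSpace ℝ E] [NormedAddCommGroup F] [NormedSpace ℝ F]
  {v : ι → E → F}

-- The normed structures on nested spaces of multilinear maps are beyond the default depth.
set_option maxSynthPendingDepth 3 in
theorem curryLeft_integral {n : ℕ} (φ : ι → E [×n + 1]→L[ℝ] F) :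
    (∫ i, φ i ∂μ).curryLeft = ∫ i, (φ i).curryLeft ∂μ :=
  ((continuousMultilinearCurryLeftEquiv ℝ (fun _ : Fin (n + 1) => E) F)
    |>.toContinuousLinearEquiv.integral_comp_comm φ).symm

theorem curry0_integral (φ : ι → E [×0]→L[ℝ] F) :
    (∫ i, φ i ∂μ).curry0 = ∫ i, (φ i).curry0 ∂μ :=
  ((continuousMultilinearCurryFin0 ℝ E F).toContinuousLinearEquiv.integral_comp_comm φ).symm

theorem aestronglyMeasurable_fderiv [FiniteDimensional ℝ E]
    (hmeas : ∀ p, AEStronglyMeasurable (v · p) μ) (hdiff : ∀ i, Differentiable ℝ (v i)) (p : E) :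
    AEStronglyMeasurable (fun i => fderiv ℝ (v i) p) μ := by
  -- Directional derivatives are limits of difference quotients; finitely many determine `fderiv`.
  have directional (e : E) : AEStronglyMeasurable (fun i => fderiv ℝ (v i) p e) μ := by
    refine aestronglyMeasurable_of_tendsto_ae atTop
      (f := fun (n : ℕ) i => (n : ℝ) • (v i (p + (n : ℝ)⁻¹ • e) - v i p))
      (fun n => ((hmeas _).sub (hmeas _)).const_smul (n : ℝ)) (ae_of_all _ fun i => ?_)
    refine (hdiff i p).hasFDerivAt.lim e ?_
    simpa using tendsto_natCast_atTop_atTop (R := ℝ)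
  let b := Module.finBasis ℝ E
  have expand (L : E →L[ℝ] F) :
      L = ∑ j, (b.coord j).toContinuousLinearMap.smulRight (L (b j)) := by
    ext e
    conv_lhs => rw [← b.sum_repr e, map_sum]
    simp
  rw [funext fun i => expand (fderiv ℝ (v i) p)]
  exact Finset.aestronglyMeasurable_fun_sum _ fun j _ =>
    (ContinuousLinearMap.smulRightL ℝ E F _).continuous.comp_aestronglyMeasurable
      (directional (b j))

theorem aestronglyMeasurable_iteratedFDeriv [FiniteDimensional ℝ E]
    (hmeas : ∀ p, AEStronglyMeasurable (v · p) μ) (hsmooth : ∀ i, ContDiff ℝ ∞ (v i)) (n : ℕ)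
    (p : E) : AEStronglyMeasurable (fun i => iteratedFDeriv ℝ n (v i) p) μ := by
  induction n generalizing p with
  | zero =>
    simp only [iteratedFDeriv_zero_eq_comp]
    exact (continuousMultilinearCurryFin0 ℝ E F).symm.continuous.comp_aestronglyMeasurable (hmeas p)
  | succ n ih =>
    simp only [iteratedFDeriv_succ_eq_comp_left]
    exact (continuousMultilinearCurryLeftEquiv ℝ (fun _ : Fin (n + 1) => E) F).symm.continuous
      |>.comp_aestronglyMeasurable (aestronglyMeasurable_fderiv ih
        (fun i => (hsmooth i).differentiable_iteratedFDeriv (mod_cast WithTop.coe_lt_top n)) p)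

theorem hasFDerivAt_integral_of_eventually_norm_fderiv_le [FiniteDimensional ℝ E]
    [IsFiniteMeasure μ] (hmeas : ∀ p, AEStronglyMeasurable (v · p) μ)
    (hdiff : ∀ i, Differentiable ℝ (v i)) {p : E} {C₀ C₁ : ℝ} (hC₀ : ∀ i, ‖v i p‖ ≤ C₀)
    (hC₁ : ∀ᶠ q in 𝓝 p, ∀ i, ‖fderiv ℝ (v i) q‖ ≤ C₁) :
    HasFDerivAt (fun q => ∫ i, v i q ∂μ) (∫ i, fderiv ℝ (v i) p ∂μ) p :=
  hasFDerivAt_integral_of_dominated_of_fderiv_le (bound := fun _ => C₁)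
    (F' := fun q i => fderiv ℝ (v i) q) hC₁ (.of_forall hmeas)
    (.of_bound (hmeas p) C₀ (ae_of_all _ hC₀)) (aestronglyMeasurable_fderiv hmeas hdiff p)
    (ae_of_all _ fun i _ hq => hq i) (integrable_const C₁)
    (ae_of_all _ fun i q _ => (hdiff i q).hasFDerivAt)

theorem hasFTaylorSeriesUpTo_integral [FiniteDimensional ℝ E] [IsFiniteMeasure μ]
    (hmeas : ∀ p, AEStronglyMeasurable (v · p) μ) (hsmooth : ∀ i, ContDiff ℝ ∞ (v i))
    (hbound : ∀ n p, ∃ C, ∀ᶠ q in 𝓝 p, ∀ i, ‖iteratedFDeriv ℝ n (v i) q‖ ≤ C) :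
    HasFTaylorSeriesUpTo ∞ (fun p => ∫ i, v i p ∂μ)
      (fun p n => ∫ i, iteratedFDeriv ℝ n (v i) p ∂μ) := by
  have hderiv (n : ℕ) (p : E) : HasFDerivAt (fun q => ∫ i, iteratedFDeriv ℝ n (v i) q ∂μ)
      (∫ i, iteratedFDeriv ℝ (n + 1) (v i) p ∂μ).curryLeft p := by
    obtain ⟨C₀, hC₀⟩ := hbound n p
    obtain ⟨C₁, hC₁⟩ := hbound (n + 1) p
    rw [curryLeft_integral]
    exact hasFDerivAt_integral_of_eventually_norm_fderiv_le
      (aestronglyMeasurable_iteratedFDeriv hmeas hsmooth n)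
      (fun i => (hsmooth i).differentiable_iteratedFDeriv (mod_cast WithTop.coe_lt_top n))
      hC₀.self_of_nhds (by simpa only [norm_fderiv_iteratedFDeriv] using hC₁)
  exact {
    zero_eq p := curry0_integral (E := E) _
    fderiv n _ := hderiv n
    cont n _ := continuous_iff_continuousAt.2 fun p => (hderiv n p).continuousAt }

end ParametricIntegral

section DirDeriv

open scoped ContDiff

variable {E F : Type*} [NormedAddCommGroup E] [NormedSpace ℝ E] [NormedAddCommGroup F]
  [NormedSpace ℝ F] {f : E → F}

/-- The derivative of `f` along the constant vector field `e`; `pdxC` and `pdxiC` are the cases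
`e = (1, 0)` and `e = (0, 1)`. -/
def dirDeriv (e : E) (f : E → F) : E → F := fun p => fderiv ℝ f p e

theorem contDiff_dirDeriv (hf : ContDiff ℝ ∞ f) (e : E) : ContDiff ℝ ∞ (dirDeriv e f) :=
  (hf.fderiv_right le_rfl).clm_apply contDiff_const

theorem contDiff_iterate_dirDeriv (hf : ContDiff ℝ ∞ f) (e : E) (n : ℕ) :
    ContDiff ℝ ∞ ((dirDeriv e)^[n] f) :=
  Function.Iterate.rec (ContDiff ℝ ∞) hf (fun _ hg => contDiff_dirDeriv hg e) n

theorem dirDeriv_dirDeriv_apply (hf : ContDiff ℝ ∞ f) (e e' p : E) :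
    dirDeriv e (dirDeriv e' f) p = fderiv ℝ (fderiv ℝ f) p e e' := by
  have hf' : DifferentiableAt ℝ (fderiv ℝ f) p :=
    (hf.fderiv_right (m := ∞) le_rfl).differentiable (by simp) p
  have hderiv := fderiv_clm_apply hf' (differentiableAt_const e')
  simpa [dirDeriv] using! DFunLike.congr_fun hderiv e

theorem dirDeriv_comm (hf : ContDiff ℝ ∞ f) (e e' : E) :
    dirDeriv e (dirDeriv e' f) = dirDeriv e' (dirDeriv e f) := by
  funext p
  have hsymm : IsSymmSndFDerivAt ℝ f p := hf.contDiffAt.isSymmSndFDerivAt (by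
    rw [minSmoothness_of_isRCLikeNormedField]; exact WithTop.coe_le_coe.2 le_top)
  rw [dirDeriv_dirDeriv_apply hf, dirDeriv_dirDeriv_apply hf, hsymm e e']

theorem iterate_dirDeriv_dirDeriv_comm (hf : ContDiff ℝ ∞ f) (e e' : E) (n : ℕ) :
    (dirDeriv e)^[n] (dirDeriv e' f) = dirDeriv e' ((dirDeriv e)^[n] f) := by
  induction n with
  | zero => rfl
  | succ n ih =>
    simp only [Function.iterate_succ_apply', ih]
    exact dirDeriv_comm (contDiff_iterate_dirDeriv hf e n) e e'

theorem norm_iteratedFDeriv_dirDeriv_le (hf : ContDiff ℝ ∞ f) (e p : E) (n : ℕ) :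
    ‖iteratedFDeriv ℝ n (dirDeriv e f) p‖ ≤ ‖e‖ * ‖iteratedFDeriv ℝ (n + 1) f p‖ := by
  rw [← norm_iteratedFDeriv_fderiv]
  exact norm_iteratedFDeriv_clm_apply_const (N := ∞)
    (hf.fderiv_right le_rfl).contDiffAt (mod_cast le_top)

theorem norm_iteratedFDeriv_iterate_dirDeriv_le (hf : ContDiff ℝ ∞ f) (e p : E) (n k : ℕ) :
    ‖iteratedFDeriv ℝ n ((dirDeriv e)^[k] f) p‖ ≤ ‖e‖ ^ k * ‖iteratedFDeriv ℝ (n + k) f p‖ := by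
  induction k generalizing n with
  | zero => simp
  | succ k ih =>
    rw [Function.iterate_succ_apply']
    calc ‖iteratedFDeriv ℝ n (dirDeriv e ((dirDeriv e)^[k] f)) p‖
        ≤ ‖e‖ * ‖iteratedFDeriv ℝ (n + 1) ((dirDeriv e)^[k] f) p‖ :=
          norm_iteratedFDeriv_dirDeriv_le (contDiff_iterate_dirDeriv hf e k) e p n
      _ ≤ ‖e‖ * (‖e‖ ^ k * ‖iteratedFDeriv ℝ (n + 1 + k) f p‖) := by gcongr; exact ih (n + 1)
      _ = ‖e‖ ^ (k + 1) * ‖iteratedFDeriv ℝ (n + (k + 1)) f p‖ := by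
          rw [pow_succ', mul_assoc, add_right_comm, add_assoc]

end DirDeriv

section Plane

open scoped ContDiff

variable {ι F : Type*} [NormedAddCommGroup F] [NormedSpace ℝ F]

theorem norm_mixed_dirDeriv_le {f : ℝ × ℝ → F} (hf : ContDiff ℝ ∞ f) (α β : ℕ) (p : ℝ × ℝ) :
    ‖(dirDeriv (1, 0))^[α] ((dirDeriv (0, 1))^[β] f) p‖ ≤ ‖iteratedFDeriv ℝ (α + β) f p‖ := by
  have hx := norm_iteratedFDeriv_iterate_dirDeriv_le
    (contDiff_iterate_dirDeriv hf (0, 1) β) (1, 0) p 0 α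
  have hξ := norm_iteratedFDeriv_iterate_dirDeriv_le hf (0, 1) p α β
  simp only [norm_iteratedFDeriv_zero, Prod.norm_mk, norm_one, norm_zero, zero_le_one,
    sup_of_le_left, sup_of_le_right, one_pow, one_mul] at hx hξ
  rw [zero_add] at hx
  exact hx.trans hξ

theorem fderiv_eq_smulRightL_add (f : ℝ × ℝ → F) :
    fderiv ℝ f =
      ContinuousLinearMap.smulRightL ℝ (ℝ × ℝ) F (.fst ℝ ℝ ℝ) ∘ dirDeriv (1, 0) f +
        ContinuousLinearMap.smulRightL ℝ (ℝ × ℝ) F (.snd ℝ ℝ ℝ) ∘ dirDeriv (0, 1) f := by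
  ext p <;> simp [dirDeriv]

theorem norm_iteratedFDeriv_succ_le {f : ℝ × ℝ → F} (hf : ContDiff ℝ ∞ f) (n : ℕ) (p : ℝ × ℝ) :
    ‖iteratedFDeriv ℝ (n + 1) f p‖ ≤
      ‖iteratedFDeriv ℝ n (dirDeriv (1, 0) f) p‖ + ‖iteratedFDeriv ℝ n (dirDeriv (0, 1) f) p‖ := by
  have comp_le {ℓ : ℝ × ℝ →L[ℝ] ℝ} (hℓ : ‖ℓ‖ ≤ 1) (e : ℝ × ℝ) :
      ‖iteratedFDeriv ℝ n (ContinuousLinearMap.smulRightL ℝ (ℝ × ℝ) F ℓ ∘ dirDeriv e f) p‖ ≤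
        ‖iteratedFDeriv ℝ n (dirDeriv e f) p‖ :=
    calc _ ≤ ‖ContinuousLinearMap.smulRightL ℝ (ℝ × ℝ) F ℓ‖ *
            ‖iteratedFDeriv ℝ n (dirDeriv e f) p‖ :=
          ContinuousLinearMap.norm_iteratedFDeriv_comp_left _
            (contDiff_dirDeriv hf e).contDiffAt (mod_cast le_top)
      _ ≤ ‖iteratedFDeriv ℝ n (dirDeriv e f) p‖ :=
          mul_le_of_le_one_left (norm_nonneg _) <|
            ContinuousLinearMap.opNorm_le_bound _ zero_le_one fun y =>
              (ℓ.norm_smulRight_apply y).trans_le (by gcongr)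
  have smooth (ℓ : ℝ × ℝ →L[ℝ] ℝ) (e : ℝ × ℝ) :
      ContDiffAt ℝ n (ContinuousLinearMap.smulRightL ℝ (ℝ × ℝ) F ℓ ∘ dirDeriv e f) p :=
    ((ContinuousLinearMap.contDiff _).comp (contDiff_dirDeriv hf e)).contDiffAt.of_le
      (mod_cast le_top)
  rw [← norm_iteratedFDeriv_fderiv, fderiv_eq_smulRightL_add,
    iteratedFDeriv_add_apply (smooth _ _) (smooth _ _)]
  exact (norm_add_le _ _).trans (add_le_add
    (comp_le (ContinuousLinearMap.norm_fst_le ℝ ℝ ℝ) _)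
    (comp_le (ContinuousLinearMap.norm_snd_le ℝ ℝ ℝ) _))

theorem exists_norm_iteratedFDeriv_le_of_mixed_dirDeriv_le {v : ι → ℝ × ℝ → F}
    {g : ℝ × ℝ → ℝ} {n : ℕ} (hv : ∀ i, ContDiff ℝ ∞ (v i))
    (hbound : ∀ α β, α + β = n → ∃ C, ∀ i p,
      ‖(dirDeriv (1, 0))^[α] ((dirDeriv (0, 1))^[β] (v i)) p‖ ≤ C * g p) :
    ∃ C, ∀ i p, ‖iteratedFDeriv ℝ n (v i) p‖ ≤ C * g p := by
  induction n generalizing v with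
  | zero => simpa using hbound 0 0 rfl
  | succ n ih =>
    obtain ⟨A, hA⟩ := ih (fun i => contDiff_dirDeriv (hv i) (1, 0)) fun α β hαβ => by
      obtain ⟨C, hC⟩ := hbound (α + 1) β (by omega)
      exact ⟨C, fun i p => by
        simpa only [iterate_dirDeriv_dirDeriv_comm (hv i), Function.iterate_succ_apply]
          using hC i p⟩
    obtain ⟨B, hB⟩ := ih (fun i => contDiff_dirDeriv (hv i) (0, 1)) fun α β hαβ =>
      hbound α (β + 1) (by omega)
    refine ⟨A + B, fun i p => (norm_iteratedFDeriv_succ_le (hv i) n p).trans ?_⟩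
    rw [add_mul]
    exact add_le_add (hA i p) (hB i p)

end Plane

section SymbolFamily

open scoped ContDiff

variable {ι κ E F : Type*} [NormedAddCommGroup E] [NormedSpace ℝ E]
  [NormedAddCommGroup F] [NormedSpace ℝ F]

/-- A family of smooth functions whose derivatives of each order `n` are bounded, uniformly in the
index, by a multiple of the weight `w n`. Total rather than partial derivatives are estimated, so
that the notion makes sense without coordinates on `E`. -/
structure IsSymbolFamily (w : ℕ → E → ℝ) (v : ι → E → F) : Prop where
  contDiff : ∀ i, ContDiff ℝ ∞ (v i)
  bound : ∀ n, ∃ C, ∀ i p, ‖iteratedFDeriv ℝ n (v i) p‖ ≤ C * w n p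

namespace IsSymbolFamily

variable {w : ℕ → E → ℝ} {u v : ι → E → F}

protected theorem sub (hu : IsSymbolFamily w u) (hv : IsSymbolFamily w v) :
    IsSymbolFamily w fun i p => u i p - v i p where
  contDiff i := (hu.contDiff i).sub (hv.contDiff i)
  bound n := by
    obtain ⟨A, hA⟩ := hu.bound n
    obtain ⟨B, hB⟩ := hv.bound n
    refine ⟨A + B, fun i p => ?_⟩
    rw [fun_iteratedFDeriv_sub_apply ((hu.contDiff i).of_le (mod_cast le_top)).contDiffAt
      ((hv.contDiff i).of_le (mod_cast le_top)).contDiffAt, add_mul]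
    exact (norm_sub_le _ _).trans (add_le_add (hA i p) (hB i p))

theorem const_smul (c : ℝ) (hv : IsSymbolFamily w v) : IsSymbolFamily w fun i p => c • v i p where
  contDiff i := (hv.contDiff i).const_smul c
  bound n := by
    obtain ⟨C, hC⟩ := hv.bound n
    refine ⟨‖c‖ * C, fun i p => ?_⟩
    rw [iteratedFDeriv_const_smul_apply' ((hv.contDiff i).of_le (mod_cast le_top)).contDiffAt,
      norm_smul, mul_assoc]
    gcongr
    exact hC i p

theorem eventually_norm_iteratedFDeriv_le (hv : IsSymbolFamily w v) (hw : ∀ n, Continuous (w n))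
    (n : ℕ) (p : E) : ∃ C, ∀ᶠ q in 𝓝 p, ∀ i, ‖iteratedFDeriv ℝ n (v i) q‖ ≤ C := by
  obtain ⟨C, hC⟩ := hv.bound n
  have hlt : ∀ᶠ q in 𝓝 p, C * w n q < C * w n p + 1 :=
    ((hw n).const_mul C).continuousAt.eventually_lt_const (lt_add_one _)
  exact ⟨C * w n p + 1, hlt.mono fun q hq i => (hC i q).trans hq.le⟩

protected theorem integral [FiniteDimensional ℝ E] [Nonempty ι] [MeasurableSpace ι]
    {μ : κ → Measure ι} [∀ k, IsFiniteMeasure (μ k)] (hv : IsSymbolFamily w v)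
    (hw : ∀ n, Continuous (w n)) (hmeas : ∀ k p, AEStronglyMeasurable (v · p) (μ k))
    {M : ℝ} (hM : ∀ k, (μ k).real .univ ≤ M) :
    IsSymbolFamily w fun k p => ∫ i, v i p ∂μ k := by
  have taylor (k : κ) := hasFTaylorSeriesUpTo_integral (hmeas k) hv.contDiff
    (hv.eventually_norm_iteratedFDeriv_le hw)
  refine ⟨fun k => (taylor k).contDiff, fun n => ?_⟩
  obtain ⟨C, hC⟩ := hv.bound n
  refine ⟨C * M, fun k p => ?_⟩
  have hCw : 0 ≤ C * w n p := (norm_nonneg _).trans (hC (Classical.arbitrary ι) p)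
  rw [← (taylor k).eq_iteratedFDeriv (mod_cast le_top)]
  calc ‖∫ i, iteratedFDeriv ℝ n (v i) p ∂μ k‖
      ≤ C * w n p * (μ k).real .univ := norm_integral_le_of_norm_le_const (ae_of_all _ (hC · p))
    _ ≤ C * w n p * M := by gcongr; exact hM k
    _ = C * M * w n p := mul_right_comm _ _ _

protected theorem intervalIntegral [FiniteDimensional ℝ E] {v : ℝ → E → F} (hv : IsSymbolFamily w v)
    (hw : ∀ n, Continuous (w n)) (hmeas : ∀ p, AEStronglyMeasurable (v · p) volume)
    {a b : κ → ℝ} {M : ℝ} (hM : ∀ k, |b k - a k| ≤ M) :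
    IsSymbolFamily w fun k p => ∫ s in a k..b k, v s p := by
  have volume_le {c d : ℝ} (h : |d - c| ≤ M) : (volume.restrict (Set.Ioc c d)).real .univ ≤ M := by
    rw [measureReal_restrict_apply_univ, volume_real_Ioc]
    exact max_le ((le_abs_self _).trans h) ((abs_nonneg _).trans h)
  exact (hv.integral hw (fun k p => (hmeas p).restrict) fun k => volume_le (hM k)).sub
    (hv.integral hw (fun k p => (hmeas p).restrict) fun k =>
      volume_le ((abs_sub_comm _ _).trans_le (hM k)))

end IsSymbolFamily

end SymbolFamily

section SymbolClass

/-- The weight `(1 + x² + ξ²) ^ (ρ - n / 2)` bounding the derivatives of order `n` of a symbol in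
`S^ρ`. -/
def symbolWeight (ρ : ℝ) (n : ℕ) (p : ℝ × ℝ) : ℝ :=
  (1 + p.1 ^ 2 + p.2 ^ 2) ^ (ρ - n / 2)

theorem symbolWeight_pos (ρ : ℝ) (n : ℕ) (p : ℝ × ℝ) : 0 < symbolWeight ρ n p := by
  unfold symbolWeight
  positivity

theorem continuous_symbolWeight (ρ : ℝ) (n : ℕ) : Continuous (symbolWeight ρ n) :=
  Continuous.rpow_const (by fun_prop) fun p => .inl (by positivity)

variable {ι : Type*} {m : ℝ} {h : ℝ → ℝ × ℝ → ℂ}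

theorem IsSymbolFamily.exists_norm_pdxC_pdxiC_le {v : ι → ℝ × ℝ → ℂ}
    (hv : IsSymbolFamily (symbolWeight m) v) (α β : ℕ) :
    ∃ C > 0, ∀ i p, ‖pdxC^[α] (pdxiC^[β] (v i)) p‖ ≤ C * symbolWeight m (α + β) p := by
  obtain ⟨C, hC⟩ := hv.bound (α + β)
  refine ⟨max C 1, by positivity, fun i p => ?_⟩
  calc ‖pdxC^[α] (pdxiC^[β] (v i)) p‖
      ≤ ‖iteratedFDeriv ℝ (α + β) (v i) p‖ := norm_mixed_dirDeriv_le (hv.contDiff i) α β p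
    _ ≤ C * symbolWeight m (α + β) p := hC i p
    _ ≤ max C 1 * symbolWeight m (α + β) p :=
        mul_le_mul_of_nonneg_right (le_max_left C 1) (symbolWeight_pos m _ p).le

theorem InC0SC.isSymbolFamily (hh : InC0SC m h) : IsSymbolFamily (symbolWeight m) h := by
  obtain ⟨-, -, hsmooth, hbound⟩ := hh
  refine ⟨hsmooth, fun n => exists_norm_iteratedFDeriv_le_of_mixed_dirDeriv_le hsmooth ?_⟩
  rintro α β rfl
  obtain ⟨C, -, hC⟩ := hbound α β
  refine ⟨C, fun t p => ?_⟩
  rw [symbolWeight, Nat.cast_add]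
  exact hC t p

theorem InC0SC.continuous_left (hh : InC0SC m h) (p : ℝ × ℝ) : Continuous fun t => h t p :=
  hh.2.1.comp (.prodMk_left p)

end SymbolClass

theorem periodic_intervalIntegral_of_integral_eq_zero {F : Type*} [NormedAddCommGroup F]
    [NormedSpace ℝ F] {f : ℝ → F} {T : ℝ} (hf : Function.Periodic f T)
    (hint : ∀ a b, IntervalIntegrable f volume a b) (hzero : ∫ s in 0..T, f s = 0) (a : ℝ) :
    Function.Periodic (fun t => ∫ s in a..t, f s) T := by
  intro t
  beta_reduce
  rw [hf.intervalIntegral_add_eq_add a t hint, hf.intervalIntegral_add_eq a 0, zero_add, hzero,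
    add_zero]

theorem intervalIntegral_im_eq_zero {f : ℝ → ℂ} (hf : ∀ t, (f t).im = 0) (a b : ℝ) :
    (∫ t in a..b, f t).im = 0 := by
  rw [← Complex.conj_eq_iff_im, ← intervalIntegral.intervalIntegral_conj]
  simp only [Complex.conj_eq_iff_im.2 (hf _)]

section HomologicalEquation

variable {m : ℝ} {h : ℝ → ℝ × ℝ → ℂ}

theorem havg_eq_average (p : ℝ × ℝ) :
    havg h p = ⨍ s in 0..(2 * π), h s p := by
  simp only [havg, interval_average_eq, sub_zero, one_div]

theorem integral_sub_havg (p : ℝ × ℝ) :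
    ∫ s in 0..(2 * π), (h s p - havg h p) = 0 := by
  rw [havg_eq_average, intervalIntegral.integral_of_le two_pi_pos.le,
    Set.uIoc_of_le two_pi_pos.le, integral_sub_average]

theorem periodic_chi (hper : ∀ t p, h (t + 2 * π) p = h t p)
    (hcont : ∀ p, Continuous fun t => h t p) : Function.Periodic (chi h) (2 * π) := fun t =>
  funext fun p => periodic_intervalIntegral_of_integral_eq_zero
    (f := fun s => h s p - havg h p) (fun s => congr_arg (· - havg h p) (hper s p))
    ((hcont p).sub continuous_const).intervalIntegrable (integral_sub_havg p) 0 t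

theorem hasDerivAt_chi {p : ℝ × ℝ} (hcont : Continuous fun t => h t p) (t : ℝ) :
    HasDerivAt (fun s => chi h s p) (h t p - havg h p) t :=
  ((hcont.sub continuous_const).integral_hasStrictDerivAt 0 t).hasDerivAt

theorem InC0SC.isSymbolFamily_sub_havg (hh : InC0SC m h) :
    IsSymbolFamily (symbolWeight m) fun t p => h t p - havg h p :=
  hh.isSymbolFamily.sub <| .const_smul _ <|
    hh.isSymbolFamily.intervalIntegral (a := fun _ : ℝ => 0) (b := fun _ => 2 * π)
      (continuous_symbolWeight m) (fun p => (hh.continuous_left p).aestronglyMeasurable)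
      fun _ => le_rfl

theorem InC0SC.isSymbolFamily_chi (hh : InC0SC m h) :
    IsSymbolFamily (symbolWeight m) (chi h) := by
  choose τ hτ hchi using (periodic_chi hh.1 hh.continuous_left).exists_mem_Ico₀ two_pi_pos
  rw [funext hchi]
  refine hh.isSymbolFamily_sub_havg.intervalIntegral (M := 2 * π) (continuous_symbolWeight m)
    (fun p => ((hh.continuous_left p).sub continuous_const).aestronglyMeasurable) fun t => ?_
  rw [sub_zero, abs_of_nonneg (hτ t).1]
  exact (hτ t).2.le

theorem chi_im_eq_zero (him : ∀ t p, (h t p).im = 0) (t : ℝ) (p : ℝ × ℝ) :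
    (chi h t p).im = 0 := by
  have havg_im : (havg h p).im = 0 := by
    rw [havg, Complex.smul_im, intervalIntegral_im_eq_zero (him · p), smul_zero]
  exact intervalIntegral_im_eq_zero (fun s => by rw [Complex.sub_im, him, havg_im, sub_zero]) 0 t

end HomologicalEquation

/-- Solution of the homological equation at the symbol level. -/
theorem homological_equation (m : ℝ) (h : ℝ → ℝ × ℝ → ℂ) (hh : InC0SC m h) :
    -- χ is 2π-periodic in t
    (∀ t p, chi h (t + 2 * π) p = chi h t p) ∧
    -- χ is differentiable in t with ∂_t χ(t,x,ξ) = h(t,x,ξ) − (1/2π)∫₀^{2π} h(s,x,ξ) ds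
    (∀ (p : ℝ × ℝ) (t : ℝ), HasDerivAt (fun s => chi h s p) (h t p - havg h p) t) ∧
    -- for each t, χ(t,·) is smooth
    (∀ t, ContDiff ℝ (⊤ : ℕ∞) (fun p => chi h t p)) ∧
    -- uniform symbol bounds of order m for ∂_x^α ∂_ξ^β ∂_t^ℓ χ, ℓ ∈ {0,1}
    (∀ α β : ℕ, ∃ C > 0, ∀ (t : ℝ) (p : ℝ × ℝ),
      ‖pdxC^[α] (pdxiC^[β] (fun q => chi h t q)) p‖ ≤
        C * (1 + p.1 ^ 2 + p.2 ^ 2) ^ (m - ((α : ℝ) + β) / 2) ∧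
      ‖pdxC^[α] (pdxiC^[β] (fun q => h t q - havg h q)) p‖ ≤
        C * (1 + p.1 ^ 2 + p.2 ^ 2) ^ (m - ((α : ℝ) + β) / 2)) ∧
    -- if h is real valued then so is χ
    ((∀ t p, (h t p).im = 0) → ∀ t p, (chi h t p).im = 0) := by
  refine ⟨fun t => congr_fun (periodic_chi hh.1 hh.continuous_left t),
    fun p => hasDerivAt_chi (hh.continuous_left p), hh.isSymbolFamily_chi.contDiff,
    fun α β => ?_, chi_im_eq_zero⟩
  obtain ⟨A, hA, hchi⟩ := hh.isSymbolFamily_chi.exists_norm_pdxC_pdxiC_le α β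
  obtain ⟨B, -, hderiv⟩ := hh.isSymbolFamily_sub_havg.exists_norm_pdxC_pdxiC_le α β
  rw [← Nat.cast_add]
  refine ⟨max A B, lt_max_of_lt_left hA, fun t p => ⟨(hchi t p).trans ?_, (hderiv t p).trans ?_⟩⟩
  · exact mul_le_mul_of_nonneg_right (le_max_left A B) (symbolWeight_pos m _ p).le
  · exact mul_le_mul_of_nonneg_right (le_max_right A B) (symbolWeight_pos m _ p).le

end
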